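/- Characterisation of exch-closure: for L ⊆ SP and U ∈ SP, U ∈ cl_exch(L) if and only if there exists V ∈ L such that U ⊑^sp V. -/

import Mathlib

namespace CKAH

open Classical

/-! ### Labelled posets and pomsets -/

/-- A labelled poset over alphabet `A`: a finite carrier with a partial order and labelling. -/
structure LPoset (A : Type) : Type 1 where
  carrier : Type
  [fin : Fintype carrier]
  [ord : PartialOrder carrier]
  lab : carrier → A

attribute [instance] LPoset.fin LPoset.ord

/-- Isomorphism of labelled posets: an order isomorphism preserving labels. -/
def LPoset.Iso {A : Type} (u v : LPoset A) : Prop :=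
  ∃ e : u.carrier ≃o v.carrier, ∀ x, v.lab (e x) = u.lab x

theorem LPoset.iso_equivalence (A : Type) : Equivalence (LPoset.Iso (A := A)) where
  refl u := ⟨OrderIso.refl _, fun _ => rfl⟩
  symm := by
    rintro u v ⟨e, he⟩
    exact ⟨e.symm, fun x => by rw [← he (e.symm x), OrderIso.apply_symm_apply]⟩
  trans := by
    rintro u v w ⟨e, he⟩ ⟨f, hf⟩
    exact ⟨e.trans f, fun x => by rw [OrderIso.trans_apply, hf, he]⟩

instance pomSetoid (A : Type) : Setoid (LPoset A) := ⟨LPoset.Iso, LPoset.iso_equivalence A⟩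

/-- A pomset is an isomorphism class of labelled posets. -/
def Pomset (A : Type) : Type 1 := Quotient (pomSetoid A)

/-- Sequential composition of labelled posets: disjoint union, everything on the left
below everything on the right (lexicographic sum order). -/
def LPoset.seqL {A : Type} (u v : LPoset A) : LPoset A where
  carrier := u.carrier ⊕ₗ v.carrier
  fin := inferInstanceAs (Fintype (u.carrier ⊕ v.carrier))
  lab := fun x => Sum.elim u.lab v.lab (ofLex x)

/-- Parallel composition of labelled posets: disjoint union with no cross ordering. -/
def LPoset.parL {A : Type} (u v : LPoset A) : LPoset A where
  carrier := u.carrier ⊕ v.carrier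
  lab := Sum.elim u.lab v.lab

def Pomset.seq {A : Type} : Pomset A → Pomset A → Pomset A :=
  Quotient.map₂ LPoset.seqL (by
    rintro u₁ u₂ ⟨e, he⟩ v₁ v₂ ⟨f, hf⟩
    refine ⟨(RelIso.sumLexCongr e f :
      (u₁.carrier ⊕ₗ v₁.carrier) ≃o (u₂.carrier ⊕ₗ v₂.carrier)), ?_⟩
    rintro (x | x)
    · exact he x
    · exact hf x)

/-- Order isomorphism between disjoint-union orders, from component isomorphisms. -/
def sumOrderIso {α β γ δ : Type} [PartialOrder α] [PartialOrder β] [PartialOrder γ]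
    [PartialOrder δ] (e : α ≃o γ) (f : β ≃o δ) : (α ⊕ β) ≃o (γ ⊕ δ) where
  toEquiv := Equiv.sumCongr e.toEquiv f.toEquiv
  map_rel_iff' := by
    rintro (x | x) (y | y) <;> simp [Sum.le_def, e.le_iff_le, f.le_iff_le]

def Pomset.par {A : Type} : Pomset A → Pomset A → Pomset A :=
  Quotient.map₂ LPoset.parL (by
    rintro u₁ u₂ ⟨e, he⟩ v₁ v₂ ⟨f, hf⟩
    refine ⟨sumOrderIso e f, ?_⟩
    rintro (x | x)
    · exact he x
    · exact hf x)

def LPoset.emptyL (A : Type) : LPoset A := { carrier := Fin 0, lab := fun x => x.elim0 }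

def LPoset.singleL {A : Type} (a : A) : LPoset A := { carrier := PUnit, lab := fun _ => a }

/-- The empty pomset `1`. -/
def Pomset.empty (A : Type) : Pomset A := ⟦LPoset.emptyL A⟧

/-- The single-letter pomset. -/
def Pomset.single {A : Type} (a : A) : Pomset A := ⟦LPoset.singleL a⟧

/-- Subsumption on labelled posets: `u ⊑ v` iff there is a label-preserving
order-preserving bijection from the carrier of `v` to that of `u`. -/
def LPoset.subL {A : Type} (u v : LPoset A) : Prop :=
  ∃ h : v.carrier ≃ u.carrier,
    (∀ x, u.lab (h x) = v.lab x) ∧ ∀ x y : v.carrier, x ≤ y → h x ≤ h y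

/-- Subsumption of pomsets: `Pomset.sub U V` means `U ⊑ V`. -/
def Pomset.sub {A : Type} : Pomset A → Pomset A → Prop :=
  Quotient.lift₂ LPoset.subL (by
    rintro u₁ v₁ u₂ v₂ ⟨e, he⟩ ⟨f, hf⟩
    refine propext ⟨?_, ?_⟩
    · rintro ⟨h, hl, hm⟩
      refine ⟨(f.toEquiv.symm.trans h).trans e.toEquiv, fun x => ?_, fun x y hxy => ?_⟩
      · show u₂.lab (e (h (f.symm x))) = v₂.lab x
        rw [he, hl, ← hf (f.symm x), OrderIso.apply_symm_apply]
      · simp only [Equiv.trans_apply]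
        exact e.le_iff_le.mpr (hm _ _ (f.symm.le_iff_le.mpr hxy))
    · rintro ⟨h, hl, hm⟩
      refine ⟨(f.toEquiv.trans h).trans e.toEquiv.symm, fun x => ?_, fun x y hxy => ?_⟩
      · show u₁.lab (e.symm (h (f x))) = v₁.lab x
        rw [← he (e.symm (h (f x))), OrderIso.apply_symm_apply, hl, hf]
      · simp only [Equiv.trans_apply]
        exact e.symm.le_iff_le.mpr (hm _ _ (f.le_iff_le.mpr hxy)))

def LPoset.isWordL {A : Type} (u : LPoset A) : Prop := ∀ x y : u.carrier, x ≤ y ∨ y ≤ x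

/-- A pomset is a word when it is totally ordered. -/
def Pomset.IsWord {A : Type} : Pomset A → Prop :=
  Quotient.lift LPoset.isWordL (by
    rintro u v ⟨e, -⟩
    refine propext ⟨fun h x y => ?_, fun h x y => ?_⟩
    · rcases h (e.symm x) (e.symm y) with h' | h'
      · exact Or.inl (e.symm.le_iff_le.mp h')
      · exact Or.inr (e.symm.le_iff_le.mp h')
    · rcases h (e x) (e y) with h' | h'
      · exact Or.inl (e.le_iff_le.mp h')
      · exact Or.inr (e.le_iff_le.mp h'))

def LPoset.mapL {A B : Type} (f : A → B) (u : LPoset A) : LPoset B :=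
  { carrier := u.carrier, lab := f ∘ u.lab }

/-- Relabelling of pomsets along a function on letters. -/
def Pomset.map {A B : Type} (f : A → B) : Pomset A → Pomset B :=
  Quotient.map (LPoset.mapL f)
    (by rintro u v ⟨e, he⟩; exact ⟨e, fun x => congrArg f (he x)⟩)

def LPoset.overL {A : Type} (Γ : Set A) (u : LPoset A) : Prop := ∀ x, u.lab x ∈ Γ

/-- All labels of the pomset belong to `Γ`. -/
def Pomset.Over {A : Type} (Γ : Set A) : Pomset A → Prop :=
  Quotient.lift (LPoset.overL Γ) (by
    rintro u v ⟨e, he⟩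
    refine propext ⟨fun h x => ?_, fun h x => ?_⟩
    · have h2 := he (e.symm x)
      rw [OrderIso.apply_symm_apply] at h2
      rw [h2]; exact h _
    · rw [← he x]; exact h _)

/-- Series-parallel pomsets. -/
inductive Pomset.IsSP {A : Type} : Pomset A → Prop
  | empty : Pomset.IsSP (Pomset.empty A)
  | single (a : A) : Pomset.IsSP (Pomset.single a)
  | seq {U V : Pomset A} : Pomset.IsSP U → Pomset.IsSP V → Pomset.IsSP (Pomset.seq U V)
  | par {U V : Pomset A} : Pomset.IsSP U → Pomset.IsSP V → Pomset.IsSP (Pomset.par U V)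

def SPset (A : Type) : Set (Pomset A) := {U | U.IsSP}

/-! ### Pomset contexts -/

/-- Contexts are pomsets over `Option A`, where `none` plays the role of `*`.
`uniqueStarL` says there is exactly one `*`-labelled node. -/
def LPoset.uniqueStarL {A : Type} (c : LPoset (Option A)) : Prop := ∃! x, c.lab x = none

theorem LPoset.uniqueStarL_congr {A : Type} {u v : LPoset (Option A)}
    (e : u.carrier ≃o v.carrier) (he : ∀ x, v.lab (e x) = u.lab x) :
    u.uniqueStarL ↔ v.uniqueStarL := by
  constructor
  · rintro ⟨x, hx, hux⟩
    refine ⟨e x, show v.lab (e x) = none by rw [he]; exact hx, fun y hy => ?_⟩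
    have h2 := he (e.symm y)
    rw [OrderIso.apply_symm_apply] at h2
    have h3 : e.symm y = x := hux _ (h2.symm.trans hy)
    rw [← h3, OrderIso.apply_symm_apply]
  · rintro ⟨x, hx, hvx⟩
    refine ⟨e.symm x, ?_, fun y hy => ?_⟩
    · show u.lab (e.symm x) = none
      have h2 := he (e.symm x)
      rw [OrderIso.apply_symm_apply] at h2
      rw [← h2]; exact hx
    · have h3 : e y = x := hvx _ (show v.lab (e y) = none by rw [he]; exact hy)
      rw [← h3, OrderIso.symm_apply_apply]

/-- A pomset context: exactly one node labelled `*`. -/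
def Pomset.IsCtx {A : Type} : Pomset (Option A) → Prop :=
  Quotient.lift LPoset.uniqueStarL
    (fun _ _ h => propext (LPoset.uniqueStarL_congr h.choose h.choose_spec))

/-- Series-parallel pomset contexts. -/
def Pomset.IsSPCtx {A : Type} (C : Pomset (Option A)) : Prop := C.IsCtx ∧ C.IsSP

/-- Sequential (totally ordered) pomset contexts. -/
def Pomset.IsSeqCtx {A : Type} (C : Pomset (Option A)) : Prop := C.IsCtx ∧ C.IsWord

/-- The trivial context `*`. -/
def starCtx (A : Type) : Pomset (Option A) := Pomset.single (none : Option A)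

theorem option_get_eq_get {α : Type} {o₁ o₂ : Option α} (h : o₁ = o₂) (h₁ : o₁.isSome)
    (h₂ : o₂.isSome) : o₁.get h₁ = o₂.get h₂ := by subst h; rfl

/-- The order of `C[U]`: the orders of `C` (restricted away from `*`) and of `U`, with a
point of `C` below (resp. above) all of `U` when it is below (resp. above) the unique
`*`-node of `C`.  (For well-definedness of the order, the cross-relations are guarded by
the requirement that the star node is unique, which holds for every genuine context.) -/
def LPoset.insLe {A : Type} (c : LPoset (Option A)) (u : LPoset A) :
    ({x : c.carrier // c.lab x ≠ none} ⊕ u.carrier) →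
    ({x : c.carrier // c.lab x ≠ none} ⊕ u.carrier) → Prop
  | Sum.inl x, Sum.inl y => x.val ≤ y.val
  | Sum.inr x, Sum.inr y => x ≤ y
  | Sum.inl x, Sum.inr _ => c.uniqueStarL ∧ ∃ s, c.lab s = none ∧ x.val ≤ s
  | Sum.inr _, Sum.inl y => c.uniqueStarL ∧ ∃ s, c.lab s = none ∧ s ≤ y.val

/-- Insertion of a labelled poset `u` into the gap of a context `c`: the `*`-labelled
node is removed and `u` is put in its place, inheriting the order relations of `*`. -/
noncomputable def LPoset.insL {A : Type} (c : LPoset (Option A)) (u : LPoset A) :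
    LPoset A where
  carrier := {x : c.carrier // c.lab x ≠ none} ⊕ u.carrier
  fin := by classical exact inferInstance
  ord :=
    { le := LPoset.insLe c u
      lt := fun p q => LPoset.insLe c u p q ∧ ¬ LPoset.insLe c u q p
      lt_iff_le_not_ge := fun _ _ => Iff.rfl
      le_refl := by rintro (x | x) <;> exact le_refl _
      le_trans := by
        rintro (x | x) (y | y) (z | z) h1 h2
        · exact le_trans h1 h2
        · obtain ⟨hu, s, hs, hys⟩ := h2
          exact ⟨hu, s, hs, le_trans h1 hys⟩
        · obtain ⟨hu, s, hs, hxs⟩ := h1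
          obtain ⟨-, t, ht, htz⟩ := h2
          obtain ⟨w, hw, huniq⟩ := hu
          have hst : s = t := (huniq s hs).trans (huniq t ht).symm
          exact le_trans (hst ▸ hxs) htz
        · exact h1
        · obtain ⟨hu, s, hs, hsy⟩ := h1
          exact ⟨hu, s, hs, le_trans hsy h2⟩
        · obtain ⟨hu, s, hs, hsy⟩ := h1
          obtain ⟨-, t, ht, hyt⟩ := h2
          obtain ⟨w, hw, huniq⟩ := hu
          have hst : s = t := (huniq s hs).trans (huniq t ht).symm
          have hy : y.val = s := le_antisymm (hst.symm ▸ hyt) hsy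
          exact absurd (hy.symm ▸ hs) y.prop
        · exact h2
        · exact le_trans h1 h2
      le_antisymm := by
        rintro (x | x) (y | y) h1 h2
        · exact congrArg Sum.inl (Subtype.ext (le_antisymm h1 h2))
        · obtain ⟨hu, s, hs, hxs⟩ := h1
          obtain ⟨-, t, ht, htx⟩ := h2
          obtain ⟨w, hw, huniq⟩ := hu
          have hst : s = t := (huniq s hs).trans (huniq t ht).symm
          have hx : x.val = s := le_antisymm hxs (hst.symm ▸ htx)
          exact absurd (hx.symm ▸ hs) x.prop
        · obtain ⟨hu, s, hs, hsy⟩ := h1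
          obtain ⟨-, t, ht, hyt⟩ := h2
          obtain ⟨w, hw, huniq⟩ := hu
          have hst : s = t := (huniq s hs).trans (huniq t ht).symm
          have hy : y.val = s := le_antisymm (hst.symm ▸ hyt) hsy
          exact absurd (hy.symm ▸ hs) y.prop
        · exact congrArg Sum.inr (le_antisymm h1 h2) }
  lab := Sum.elim (fun x => (c.lab x.val).get (Option.isSome_iff_ne_none.mpr x.prop)) u.lab

/-- `Pomset.ins C U` is `C[U]`: plugging the pomset `U` into the gap of the context `C`. -/
noncomputable def Pomset.ins {A : Type} : Pomset (Option A) → Pomset A → Pomset A :=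
  Quotient.map₂ LPoset.insL (by
    rintro c₁ c₂ ⟨e, he⟩ u₁ u₂ ⟨f, hf⟩
    have hstar : c₁.uniqueStarL ↔ c₂.uniqueStarL := LPoset.uniqueStarL_congr e he
    refine ⟨{ toEquiv := Equiv.sumCongr
                (e.toEquiv.subtypeEquiv fun x => by
                  rw [show c₂.lab (e.toEquiv x) = c₁.lab x from he x]) f.toEquiv
              map_rel_iff' := ?_ }, ?_⟩
    · rintro (x | x) (y | y)
      · exact e.le_iff_le
      · show (c₂.uniqueStarL ∧ ∃ s, c₂.lab s = none ∧ (e x.val : c₂.carrier) ≤ s) ↔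
             (c₁.uniqueStarL ∧ ∃ s, c₁.lab s = none ∧ x.val ≤ s)
        constructor
        · rintro ⟨hu, s, hs, hxs⟩
          refine ⟨hstar.mpr hu, e.symm s, ?_, ?_⟩
          · have h2 := he (e.symm s)
            rw [OrderIso.apply_symm_apply] at h2
            rw [← h2]; exact hs
          · exact e.le_iff_le.mp (by rw [OrderIso.apply_symm_apply]; exact hxs)
        · rintro ⟨hu, s, hs, hxs⟩
          exact ⟨hstar.mp hu, e s, by rw [he]; exact hs, e.le_iff_le.mpr hxs⟩
      · show (c₂.uniqueStarL ∧ ∃ s, c₂.lab s = none ∧ s ≤ (e y.val : c₂.carrier)) ↔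
             (c₁.uniqueStarL ∧ ∃ s, c₁.lab s = none ∧ s ≤ y.val)
        constructor
        · rintro ⟨hu, s, hs, hsy⟩
          refine ⟨hstar.mpr hu, e.symm s, ?_, ?_⟩
          · have h2 := he (e.symm s)
            rw [OrderIso.apply_symm_apply] at h2
            rw [← h2]; exact hs
          · exact e.le_iff_le.mp (by rw [OrderIso.apply_symm_apply]; exact hsy)
        · rintro ⟨hu, s, hs, hsy⟩
          exact ⟨hstar.mp hu, e s, by rw [he]; exact hs, e.le_iff_le.mpr hsy⟩
      · exact f.le_iff_le
    · rintro (x | x)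
      · exact option_get_eq_get (he x.val) _ _
      · exact hf x)

/-! ### Pomset languages -/

abbrev Lang (A : Type) := Set (Pomset A)

def Lang.seq {A : Type} (L K : Lang A) : Lang A :=
  {W | ∃ U ∈ L, ∃ V ∈ K, W = Pomset.seq U V}

def Lang.par {A : Type} (L K : Lang A) : Lang A :=
  {W | ∃ U ∈ L, ∃ V ∈ K, W = Pomset.par U V}

def Lang.pow {A : Type} (L : Lang A) : ℕ → Lang A
  | 0 => {Pomset.empty A}
  | n + 1 => Lang.seq (Lang.pow L n) L

def Lang.star {A : Type} (L : Lang A) : Lang A := ⋃ n, L.pow n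

/-- Application of a context to a language: `C[L] = {C[U] : U ∈ L}`. -/
def Ctx.img {A : Type} (C : Pomset (Option A)) (L : Lang A) : Lang A :=
  {W | ∃ U ∈ L, W = C.ins U}

/-! ### CKA terms and semantics -/

inductive Term (A : Type) : Type
  | zero : Term A
  | one : Term A
  | var : A → Term A
  | add : Term A → Term A → Term A
  | seq : Term A → Term A → Term A
  | par : Term A → Term A → Term A
  | star : Term A → Term A

/-- Pomset language semantics of CKA terms. -/
def Term.lang {A : Type} : Term A → Lang A
  | .zero => ∅
  | .one => {Pomset.empty A}
  | .var a => {Pomset.single a}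
  | .add e f => e.lang ∪ f.lang
  | .seq e f => Lang.seq e.lang f.lang
  | .par e f => Lang.par e.lang f.lang
  | .star e => Lang.star e.lang

/-- Sets of hypotheses: a hypothesis `e ≤ f` is the pair `(e, f)`. -/
abbrev HypSet (A : Type) := Set (Term A × Term A)

/-- The congruence `≡^H` on CKA terms generated by the CKA axioms and the hypotheses `H`
(the constructor `hyp` encodes `e ≦^H f`, i.e. `e + f ≡^H f`, for `e ≤ f ∈ H`). -/
inductive CongH {A : Type} (H : HypSet A) : Term A → Term A → Prop
  | refl (e) : CongH H e e
  | symm {e f} : CongH H e f → CongH H f e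
  | trans {e f g} : CongH H e f → CongH H f g → CongH H e g
  | addCong {e e' f f'} : CongH H e e' → CongH H f f' → CongH H (.add e f) (.add e' f')
  | seqCong {e e' f f'} : CongH H e e' → CongH H f f' → CongH H (.seq e f) (.seq e' f')
  | parCong {e e' f f'} : CongH H e e' → CongH H f f' → CongH H (.par e f) (.par e' f')
  | starCong {e e'} : CongH H e e' → CongH H (.star e) (.star e')
  | addZero (e) : CongH H (.add e .zero) e
  | addIdem (e) : CongH H (.add e e) e
  | addComm (e f) : CongH H (.add e f) (.add f e)
  | addAssoc (e f g) : CongH H (.add e (.add f g)) (.add (.add e f) g)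
  | seqAssoc (e f g) : CongH H (.seq e (.seq f g)) (.seq (.seq e f) g)
  | seqDistL (e f g) : CongH H (.seq e (.add f g)) (.add (.seq e f) (.seq e g))
  | seqDistR (e f g) : CongH H (.seq (.add e f) g) (.add (.seq e g) (.seq f g))
  | seqOneR (e) : CongH H (.seq e .one) e
  | seqOneL (e) : CongH H (.seq .one e) e
  | seqZeroR (e) : CongH H (.seq e .zero) .zero
  | seqZeroL (e) : CongH H (.seq .zero e) .zero
  | parComm (e f) : CongH H (.par e f) (.par f e)
  | parOne (e) : CongH H (.par e .one) e
  | parZero (e) : CongH H (.par e .zero) .zero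
  | parAssoc (e f g) : CongH H (.par e (.par f g)) (.par (.par e f) g)
  | parDist (e f g) : CongH H (.par e (.add f g)) (.add (.par e f) (.par e g))
  | starUnfoldL (e) : CongH H (.add .one (.seq e (.star e))) (.star e)
  | starUnfoldR (e) : CongH H (.add .one (.seq (.star e) e)) (.star e)
  | lfpL {e f g} : CongH H (.add (.add e (.seq f g)) g) g →
      CongH H (.add (.seq (.star f) e) g) g
  | lfpR {e f g} : CongH H (.add (.add e (.seq f g)) f) f →
      CongH H (.add (.seq e (.star g)) f) f
  | hyp {e f} : (e, f) ∈ H → CongH H (.add e f) f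

/-- `e ≦^H f`, the natural order `e + f ≡^H f`. -/
def LeH {A : Type} (H : HypSet A) (e f : Term A) : Prop := CongH H (.add e f) f

/-- The `H`-closure of a pomset language, as an inductive predicate: the smallest language
containing `L` such that for all `e ≤ f ∈ H` and series-parallel contexts `C`,
if `C[⟦f⟧] ⊆ cl` then `C[⟦e⟧] ⊆ cl`. -/
inductive closure {A : Type} (H : HypSet A) (L : Lang A) : Pomset A → Prop
  | base {U} : U ∈ L → closure H L U
  | step {e f : Term A} (hef : (e, f) ∈ H) {C : Pomset (Option A)} (hC : C.IsSPCtx)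
      (hf : ∀ V ∈ f.lang, closure H L (C.ins V)) {U} (hU : U ∈ e.lang) :
      closure H L (C.ins U)

/-- `cl H L` is the `H`-closure of `L`. -/
def cl {A : Type} (H : HypSet A) (L : Lang A) : Lang A := {U | closure H L U}

/-- The sequential closure: like `cl` but only sequential contexts are used. -/
inductive seqClosure {A : Type} (H : HypSet A) (L : Lang A) : Pomset A → Prop
  | base {U} : U ∈ L → seqClosure H L U
  | step {e f : Term A} (hef : (e, f) ∈ H) {C : Pomset (Option A)} (hC : C.IsSeqCtx)
      (hf : ∀ V ∈ f.lang, seqClosure H L (C.ins V)) {U} (hU : U ∈ e.lang) :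
      seqClosure H L (C.ins U)

def seqCl {A : Type} (H : HypSet A) (L : Lang A) : Lang A := {U | seqClosure H L U}

/-! ### Implication, completeness, reductions -/

/-- `H` implies `H'`: every hypothesis of `H'` is derivable from `H`. -/
def Implies {A : Type} (H H' : HypSet A) : Prop := ∀ p ∈ H', LeH H p.1 p.2

/-- `H` is complete: semantic equivalence implies axiomatic equivalence. -/
def Complete {A : Type} (H : HypSet A) : Prop :=
  ∀ e f : Term A, cl H e.lang = cl H f.lang → CongH H e f

/-- A reduction from `H` to `H'` (presupposing that `H` implies `H'`). -/
structure IsReduction {A : Type} (H H' : HypSet A) (r : Term A → Term A) : Prop where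
  implies : Implies H H'
  equiv : ∀ e, CongH H e (r e)
  reflect : ∀ e f : Term A, cl H e.lang = cl H f.lang → cl H' (r e).lang = cl H' (r f).lang

def Reduces {A : Type} (H H' : HypSet A) : Prop := ∃ r, IsReduction H H' r

/-- A strong reduction from `H` to `H'`. -/
structure IsStrongReduction {A : Type} (H H' : HypSet A) (r : Term A → Term A)
    extends IsReduction H H' r : Prop where
  strong : ∀ e : Term A, cl H e.lang = cl H' (r e).lang

def StronglyReduces {A : Type} (H H' : HypSet A) : Prop := ∃ r, IsStrongReduction H H' r

/-- `H` factorises into `H₀` and `H₁`. -/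
def Factorises {A : Type} (H H₀ H₁ : HypSet A) : Prop :=
  Implies H H₀ ∧ Implies H H₁ ∧ ∀ L : Lang A, L ⊆ SPset A → cl H L = cl H₁ (cl H₀ L)

/-! ### The exchange hypotheses and sp-subsumption -/

/-- The exchange hypotheses `(e∥f)·(g∥h) ≤ (e·g)∥(f·h)`. -/
def exch (A : Type) : HypSet A :=
  {p | ∃ e f g h : Term A,
    p = (Term.seq (.par e f) (.par g h), Term.par (.seq e g) (.seq f h))}

/-- `⊑^sp`: the smallest precongruence on series-parallel pomsets satisfying the
exchange inequality. -/
inductive spSub {A : Type} : Pomset A → Pomset A → Prop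
  | refl {U : Pomset A} : U.IsSP → spSub U U
  | trans {U V W} : spSub U V → spSub V W → spSub U W
  | seqCong {U V U' V'} : spSub U V → spSub U' V' → spSub (Pomset.seq U U') (Pomset.seq V V')
  | parCong {U V U' V'} : spSub U V → spSub U' V' → spSub (Pomset.par U U') (Pomset.par V V')
  | exch {U V W X : Pomset A} : U.IsSP → V.IsSP → W.IsSP → X.IsSP →
      spSub (Pomset.seq (Pomset.par U V) (Pomset.par W X))
            (Pomset.par (Pomset.seq U W) (Pomset.seq V X))

/-! ### KA terms, grounded hypotheses, sequential reductions -/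

/-- A term is a KA term when it contains no `∥`. -/
def Term.noPar {A : Type} : Term A → Prop
  | .zero => True
  | .one => True
  | .var _ => True
  | .add e f => e.noPar ∧ f.noPar
  | .seq e f => e.noPar ∧ f.noPar
  | .par _ _ => False
  | .star e => e.noPar

/-- A non-empty word. -/
def IsNonemptyWord {A : Type} (W : Pomset A) : Prop := W.IsWord ∧ W ≠ Pomset.empty A

/-- A set of hypotheses is grounded when in each hypothesis `e ≤ f`, `e` is a KA term and
`⟦f⟧ = {W}` for a non-empty word `W`. -/
def Grounded {A : Type} (H : HypSet A) : Prop :=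
  ∀ p ∈ H, p.1.noPar ∧ ∃ W : Pomset A, IsNonemptyWord W ∧ p.2.lang = {W}

/-- `≡_KA^H`: the congruence on terms generated by the axioms of `≡` not involving `∥`
together with the hypotheses of `H`. -/
inductive KACong {A : Type} (H : HypSet A) : Term A → Term A → Prop
  | refl (e) : KACong H e e
  | symm {e f} : KACong H e f → KACong H f e
  | trans {e f g} : KACong H e f → KACong H f g → KACong H e g
  | addCong {e e' f f'} : KACong H e e' → KACong H f f' → KACong H (.add e f) (.add e' f')
  | seqCong {e e' f f'} : KACong H e e' → KACong H f f' → KACong H (.seq e f) (.seq e' f')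
  | starCong {e e'} : KACong H e e' → KACong H (.star e) (.star e')
  | addZero (e) : KACong H (.add e .zero) e
  | addIdem (e) : KACong H (.add e e) e
  | addComm (e f) : KACong H (.add e f) (.add f e)
  | addAssoc (e f g) : KACong H (.add e (.add f g)) (.add (.add e f) g)
  | seqAssoc (e f g) : KACong H (.seq e (.seq f g)) (.seq (.seq e f) g)
  | seqDistL (e f g) : KACong H (.seq e (.add f g)) (.add (.seq e f) (.seq e g))
  | seqDistR (e f g) : KACong H (.seq (.add e f) g) (.add (.seq e g) (.seq f g))
  | seqOneR (e) : KACong H (.seq e .one) e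
  | seqOneL (e) : KACong H (.seq .one e) e
  | seqZeroR (e) : KACong H (.seq e .zero) .zero
  | seqZeroL (e) : KACong H (.seq .zero e) .zero
  | starUnfoldL (e) : KACong H (.add .one (.seq e (.star e))) (.star e)
  | starUnfoldR (e) : KACong H (.add .one (.seq (.star e) e)) (.star e)
  | lfpL {e f g} : KACong H (.add (.add e (.seq f g)) g) g →
      KACong H (.add (.seq (.star f) e) g) g
  | lfpR {e f g} : KACong H (.add (.add e (.seq f g)) f) f →
      KACong H (.add (.seq e (.star g)) f) f
  | hyp {e f} : (e, f) ∈ H → KACong H (.add e f) f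

/-- A sequential reduction from `H` to `H'`. -/
structure IsSeqReduction {A : Type} (H H' : HypSet A) (r : Term A → Term A) : Prop where
  implies : Implies H H'
  equiv : ∀ e : Term A, e.noPar → KACong H e (r e)
  closure_eq : ∀ e : Term A, e.noPar → seqCl H e.lang = seqCl H' (r e).lang

/-- Extension of a map on (KA) terms to all CKA terms, homomorphically on `∥`. -/
def parExt {A : Type} (r : Term A → Term A) : Term A → Term A
  | .par e f => .par (parExt r e) (parExt r f)
  | e => r e

/-! ### Inductive characterisation of sp contexts -/

/-- The generators of series-parallel contexts (Lemma: `PC^sp` is the smallest such set). -/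
inductive GenCtx {A : Type} : Pomset (Option A) → Prop
  | star : GenCtx (Pomset.single (none : Option A))
  | seqL {U : Pomset A} {C} : U.IsSP → GenCtx C → GenCtx (Pomset.seq (Pomset.map some U) C)
  | seqR {C} {V : Pomset A} : GenCtx C → V.IsSP → GenCtx (Pomset.seq C (Pomset.map some V))
  | par {U : Pomset A} {C} : U.IsSP → GenCtx C → GenCtx (Pomset.par (Pomset.map some U) C)

/-! ### Reification -/

/-- Homomorphic extension of a letter map to terms. -/
def rTerm {A : Type} (r : A → Term A) : Term A → Term A
  | .zero => .zero
  | .one => .one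
  | .var a => r a
  | .add e f => .add (rTerm r e) (rTerm r f)
  | .seq e f => .seq (rTerm r e) (rTerm r f)
  | .par e f => .par (rTerm r e) (rTerm r f)
  | .star e => .star (rTerm r e)

/-- All letters of a term lie in `Γ`. -/
def TermOver {A : Type} (Γ : Set A) : Term A → Prop
  | .zero => True
  | .one => True
  | .var a => a ∈ Γ
  | .add e f => TermOver Γ e ∧ TermOver Γ f
  | .seq e f => TermOver Γ e ∧ TermOver Γ f
  | .par e f => TermOver Γ e ∧ TermOver Γ f
  | .star e => TermOver Γ e

/-- Extension of a letter map `r` to (series-parallel) pomsets, as a relation: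
`rMap r U V` means `V ∈ r(U)`. -/
inductive rMap {A : Type} (r : A → Term A) : Pomset A → Pomset A → Prop
  | one : rMap r (Pomset.empty A) (Pomset.empty A)
  | var (a : A) {V} : V ∈ (r a).lang → rMap r (Pomset.single a) V
  | seq {U U' V V'} : rMap r U V → rMap r U' V' →
      rMap r (Pomset.seq U U') (Pomset.seq V V')
  | par {U U' V V'} : rMap r U V → rMap r U' V' →
      rMap r (Pomset.par U U') (Pomset.par V V')

/-- Image of a language under (the pomset extension of) `r`. -/
def rImg {A : Type} (r : A → Term A) (L : Lang A) : Lang A := {V | ∃ U ∈ L, rMap r U V}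

/-- Series-parallel pomsets over the subalphabet `Γ`. -/
def SPover {A : Type} (Γ : Set A) : Lang A := {U | U.IsSP ∧ U.Over Γ}

/-- `r : Σ → Term Γ` is a reification from `H` to `H'`. -/
structure IsReification {A : Type} (Γ : Set A) (H H' : HypSet A) (r : A → Term A) : Prop where
  toGamma : ∀ a : A, TermOver Γ (r a)
  equiv : ∀ a : A, CongH H (r a) (.var a)
  expansive : ∀ a ∈ Γ, LeH (∅ : HypSet A) (.var a) (r a)
  preserves : ∀ L : Lang A, L ⊆ SPover Γ → cl H' L ⊆ SPover Γ
  hyps : ∀ p ∈ H, LeH H' (rTerm r p.1) (rTerm r p.2)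

end CKAH

namespace CKAH

/-! The right-to-left direction says that `(U · W) ∥ (V · X)` may be replaced by
`(U ∥ V) · (W ∥ X)` in any series-parallel context while staying in the closure: every
series-parallel pomset is the language of a term, so this is an instance of an `exch`
hypothesis, and the congruence rules follow because series-parallel contexts compose.
Conversely, each closure step inserts a language `⟦(e ∥ f) · (g ∥ h)⟧` into a context, and
each of its members is subsumed by a member of `⟦(e · g) ∥ (f · h)⟧`.  Subsumption passes
through the context since series-parallel contexts are exactly those generated from `*` by
composing with series-parallel pomsets (`GenCtx`). -/

variable {A : Type}

theorem LPoset.Iso.of_surjective {u v : LPoset A} (g : u.carrier → v.carrier)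
    (hle : ∀ x y, x ≤ y ↔ g x ≤ g y) (hsurj : Function.Surjective g)
    (hlab : ∀ x, v.lab (g x) = u.lab x) : u.Iso v :=
  ⟨RelIso.ofSurjective (OrderEmbedding.ofMapLEIff g fun x y => (hle x y).symm) hsurj, hlab⟩

/-! ### Relabelling and counting -/

namespace Pomset

theorem par_comm (U V : Pomset A) : U.par V = V.par U := by
  induction U, V using Quotient.inductionOn₂ with | _ u v
  exact Quotient.sound ⟨OrderIso.sumComm _ _, by rintro (x | x) <;> rfl⟩

section Map

variable {B : Type} (f : A → B)

theorem map_empty : (empty A).map f = empty B :=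
  Quotient.sound ⟨OrderIso.refl _, fun x => x.elim0⟩

theorem map_seq (U V : Pomset A) : (U.seq V).map f = (U.map f).seq (V.map f) := by
  induction U, V using Quotient.inductionOn₂ with | _ u v
  exact Quotient.sound ⟨OrderIso.refl _, by rintro (x | x) <;> rfl⟩

theorem map_par (U V : Pomset A) : (U.par V).map f = (U.map f).par (V.map f) := by
  induction U, V using Quotient.inductionOn₂ with | _ u v
  exact Quotient.sound ⟨OrderIso.refl _, by rintro (x | x) <;> rfl⟩

variable {f} in
theorem IsSP.map {U : Pomset A} (hU : U.IsSP) : (U.map f).IsSP := by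
  induction hU with
  | empty => exact map_empty f ▸ .empty
  | single a => exact .single (f a)
  | seq _ _ ihU ihV => exact map_seq f _ _ ▸ ihU.seq ihV
  | par _ _ ihU ihV => exact map_par f _ _ ▸ ihU.par ihV

end Map

/-- The number of nodes labelled `a`. Contexts are the pomsets with `count none = 1`, and
additivity of `count` locates the gap of a composite context in one of its two parts. -/
noncomputable def count (a : A) : Pomset A → ℕ :=
  Quotient.lift (fun u : LPoset A => Nat.card {x // u.lab x = a}) fun _ _ ⟨e, he⟩ =>
    Nat.card_congr (e.toEquiv.subtypeEquiv fun x => by rw [← he x]; rfl)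

theorem count_empty (a : A) : (empty A).count a = 0 :=
  have : IsEmpty {x // (LPoset.emptyL A).lab x = a} := ⟨fun x => x.1.elim0⟩
  Nat.card_of_isEmpty

theorem count_single_self (a : A) : (single a).count a = 1 :=
  Nat.card_eq_one_iff_exists.mpr ⟨⟨PUnit.unit, rfl⟩, fun _ => rfl⟩

theorem count_single_of_ne {a b : A} (h : b ≠ a) : (single b).count a = 0 :=
  have : IsEmpty {x // (LPoset.singleL b).lab x = a} := ⟨fun x => h x.2⟩
  Nat.card_of_isEmpty

theorem count_par (a : A) (U V : Pomset A) : (U.par V).count a = U.count a + V.count a := by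
  induction U, V using Quotient.inductionOn₂ with | _ u v
  exact (Nat.card_congr Equiv.subtypeSum).trans Nat.card_sum

theorem count_seq (a : A) (U V : Pomset A) : (U.seq V).count a = U.count a + V.count a := by
  -- Counting ignores the order, and `u.seqL v` has the same nodes and labels as `u.parL v`.
  rw [← count_par]
  induction U, V using Quotient.inductionOn₂ with | _ u v
  rfl

theorem count_map_of_forall_ne {B : Type} {f : A → B} {b : B} (h : ∀ a, f a ≠ b)
    (U : Pomset A) : (U.map f).count b = 0 := by
  induction U using Quotient.inductionOn with | _ u
  have : IsEmpty {x // (u.mapL f).lab x = b} := ⟨fun x => h _ x.2⟩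
  exact Nat.card_of_isEmpty

theorem count_none_map_some (U : Pomset A) : (U.map some).count none = 0 :=
  count_map_of_forall_ne Option.some_ne_none U

theorem isCtx_iff_count_eq_one {C : Pomset (Option A)} : C.IsCtx ↔ C.count none = 1 := by
  induction C using Quotient.inductionOn with | _ c
  exact ((unique_subtype_iff_existsUnique _).symm.trans
    (unique_iff_subsingleton_and_nonempty _)).trans Nat.card_eq_one_iff_unique.symm

section

variable {C : Pomset (Option A)}

theorem IsCtx.map_some_seq (hC : C.IsCtx) (U : Pomset A) : ((U.map some).seq C).IsCtx := by
  rw [isCtx_iff_count_eq_one] at *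
  rw [count_seq, count_none_map_some, hC]

theorem IsCtx.seq_map_some (hC : C.IsCtx) (U : Pomset A) :
    (C.seq (U.map some)).IsCtx := by
  rw [isCtx_iff_count_eq_one] at *
  rw [count_seq, count_none_map_some, hC]

theorem IsCtx.map_some_par (hC : C.IsCtx) (U : Pomset A) : ((U.map some).par C).IsCtx := by
  rw [isCtx_iff_count_eq_one] at *
  rw [count_par, count_none_map_some, hC]

end

theorem IsSP.exists_map_some_eq {C : Pomset (Option A)} (hC : C.IsSP)
    (h : C.count none = 0) : ∃ U : Pomset A, U.IsSP ∧ U.map some = C := by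
  induction hC with
  | empty => exact ⟨Pomset.empty A, .empty, map_empty some⟩
  | single a =>
    cases a with
    | none => exact absurd h (by rw [count_single_self]; exact one_ne_zero)
    | some a => exact ⟨Pomset.single a, .single a, rfl⟩
  | seq _ _ ihC ihD =>
    rw [count_seq, Nat.add_eq_zero_iff] at h
    obtain ⟨⟨U, hU, rfl⟩, ⟨V, hV, rfl⟩⟩ := And.intro (ihC h.1) (ihD h.2)
    exact ⟨U.seq V, hU.seq hV, map_seq some U V⟩
  | par _ _ ihC ihD =>
    rw [count_par, Nat.add_eq_zero_iff] at h
    obtain ⟨⟨U, hU, rfl⟩, ⟨V, hV, rfl⟩⟩ := And.intro (ihC h.1) (ihD h.2)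
    exact ⟨U.par V, hU.par hV, map_par some U V⟩

end Pomset

/-! ### Series-parallel contexts -/

theorem GenCtx.isSPCtx {C : Pomset (Option A)} (hC : GenCtx C) : C.IsSPCtx := by
  induction hC with
  | star => exact ⟨Pomset.isCtx_iff_count_eq_one.mpr (Pomset.count_single_self none), .single none⟩
  | @seqL U _ hU _ ih => exact ⟨ih.1.map_some_seq U, hU.map.seq ih.2⟩
  | @seqR _ V _ hV ih => exact ⟨ih.1.seq_map_some V, ih.2.seq hV.map⟩
  | @par U _ hU _ ih => exact ⟨ih.1.map_some_par U, hU.map.par ih.2⟩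

theorem Pomset.IsSPCtx.genCtx {C : Pomset (Option A)} (hC : C.IsSPCtx) : GenCtx C := by
  obtain ⟨hctx, hsp⟩ := hC
  rw [isCtx_iff_count_eq_one] at hctx
  induction hsp with
  | empty => exact absurd hctx (by rw [count_empty]; exact zero_ne_one)
  | single a =>
    cases a with
    | none => exact .star
    | some a =>
      rw [count_single_of_ne (Option.some_ne_none a)] at hctx
      exact absurd hctx zero_ne_one
  | seq hC hD ihC ihD =>
    rw [count_seq, Nat.add_eq_one_iff] at hctx
    obtain ⟨hC₀, hD₁⟩ | ⟨hC₁, hD₀⟩ := hctx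
    · obtain ⟨U, hU, rfl⟩ := hC.exists_map_some_eq hC₀
      exact .seqL hU (ihD hD₁)
    · obtain ⟨V, hV, rfl⟩ := hD.exists_map_some_eq hD₀
      exact .seqR (ihC hC₁) hV
  | par hC hD ihC ihD =>
    rw [count_par, Nat.add_eq_one_iff] at hctx
    obtain ⟨hC₀, hD₁⟩ | ⟨hC₁, hD₀⟩ := hctx
    · obtain ⟨U, hU, rfl⟩ := hC.exists_map_some_eq hC₀
      exact .par hU (ihD hD₁)
    · obtain ⟨V, hV, rfl⟩ := hD.exists_map_some_eq hD₀
      rw [par_comm]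
      exact .par hV (ihC hC₁)

/-! ### Insertion into generated contexts -/

namespace LPoset

section Order

variable {u v : LPoset A} {x x' : u.carrier} {y y' : v.carrier}

theorem seqL_inl_le_inl_iff : (u.seqL v).ord.le (.inl x) (.inl x') ↔ x ≤ x' :=
  Sum.Lex.inl_le_inl_iff

theorem seqL_inr_le_inr_iff : (u.seqL v).ord.le (.inr y) (.inr y') ↔ y ≤ y' :=
  Sum.Lex.inr_le_inr_iff

theorem seqL_inl_le_inr : (u.seqL v).ord.le (.inl x) (.inr y) :=
  Sum.Lex.inl_le_inr x y

theorem not_seqL_inr_le_inl : ¬ (u.seqL v).ord.le (.inr y) (.inl x) :=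
  Sum.Lex.not_inr_le_inl

theorem parL_inl_le_inl_iff : (u.parL v).ord.le (.inl x) (.inl x') ↔ x ≤ x' :=
  Sum.inl_le_inl_iff

theorem parL_inr_le_inr_iff : (u.parL v).ord.le (.inr y) (.inr y') ↔ y ≤ y' :=
  Sum.inr_le_inr_iff

theorem not_parL_inl_le_inr : ¬ (u.parL v).ord.le (.inl x) (.inr y) :=
  Sum.not_inl_le_inr

theorem not_parL_inr_le_inl : ¬ (u.parL v).ord.le (.inr y) (.inl x) :=
  Sum.not_inr_le_inl

end Order

variable {c : LPoset (Option A)} {s : c.carrier} {u v : LPoset A}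
  {x : {x // c.lab x ≠ none}} {y : v.carrier}

theorem insL_inl_le_inr_iff (hc : c.uniqueStarL) (hs : c.lab s = none) :
    (c.insL v).ord.le (.inl x) (.inr y) ↔ x.1 ≤ s :=
  ⟨fun ⟨_, _, ht, hxt⟩ => hc.unique ht hs ▸ hxt, fun h => ⟨hc, s, hs, h⟩⟩

theorem insL_inr_le_inl_iff (hc : c.uniqueStarL) (hs : c.lab s = none) :
    (c.insL v).ord.le (.inr y) (.inl x) ↔ s ≤ x.1 :=
  ⟨fun ⟨_, _, ht, htx⟩ => hc.unique ht hs ▸ htx, fun h => ⟨hc, s, hs, h⟩⟩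

theorem insL_iso_of_surjective {w : LPoset A} (hc : c.uniqueStarL) (hs : c.lab s = none)
    (i : {x // c.lab x ≠ none} → w.carrier) (j : v.carrier → w.carrier)
    (hii : ∀ x x', i x ≤ i x' ↔ x.1 ≤ x'.1) (hij : ∀ x y, i x ≤ j y ↔ x.1 ≤ s)
    (hji : ∀ y x, j y ≤ i x ↔ s ≤ x.1) (hjj : ∀ y y', j y ≤ j y' ↔ y ≤ y')
    (hsurj : ∀ z, (∃ x, i x = z) ∨ ∃ y, j y = z)
    (hi : ∀ x, some (w.lab (i x)) = c.lab x.1) (hj : ∀ y, w.lab (j y) = v.lab y) :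
    (c.insL v).Iso w := by
  refine .of_surjective (Sum.elim i j) ?_ ?_ ?_
  · rintro (x | y) (x' | y')
    · exact (hii x x').symm
    · exact (insL_inl_le_inr_iff hc hs).trans (hij x y').symm
    · exact (insL_inr_le_inl_iff hc hs).trans (hji y x').symm
    · exact (hjj y y').symm
  · exact fun z => (hsurj z).elim (fun ⟨x, hx⟩ => ⟨.inl x, hx⟩) fun ⟨y, hy⟩ => ⟨.inr y, hy⟩
  · rintro (x | y)
    · exact Option.some_injective _ ((hi x).trans (Option.some_get _).symm)
    · exact hj y

theorem mapL_some_seqL_insL_iso (hc : c.uniqueStarL) :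
    (((u.mapL some).seqL c).insL v).Iso (u.seqL (c.insL v)) := by
  obtain ⟨s, hs, -⟩ := id hc
  have huc : ((u.mapL some).seqL c).uniqueStarL := Pomset.IsCtx.map_some_seq (C := ⟦c⟧) hc ⟦u⟧
  have hstar : ((u.mapL some).seqL c).lab (.inr s) = none := hs
  refine insL_iso_of_surjective huc hstar
    (fun | ⟨.inl x, _⟩ => .inl x | ⟨.inr y, hy⟩ => .inr (.inl ⟨y, hy⟩)) (fun z => .inr (.inr z))
    ?_ ?_ ?_ (fun _ _ => seqL_inr_le_inr_iff) ?_ ?_ fun _ => rfl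
  · rintro ⟨x | y, hx⟩ ⟨x' | y', hx'⟩
    · exact seqL_inl_le_inl_iff.trans (seqL_inl_le_inl_iff (u := u.mapL some)).symm
    · exact iff_of_true seqL_inl_le_inr seqL_inl_le_inr
    · exact iff_of_false not_seqL_inr_le_inl not_seqL_inr_le_inl
    · exact seqL_inr_le_inr_iff.trans (seqL_inr_le_inr_iff (v := c)).symm
  · rintro ⟨x | y, hx⟩ z
    · exact iff_of_true seqL_inl_le_inr seqL_inl_le_inr
    · exact seqL_inr_le_inr_iff.trans <| (insL_inl_le_inr_iff hc hs).trans
        (seqL_inr_le_inr_iff (v := c)).symm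
  · rintro z ⟨x | y, hx⟩
    · exact iff_of_false not_seqL_inr_le_inl not_seqL_inr_le_inl
    · exact seqL_inr_le_inr_iff.trans <| (insL_inr_le_inl_iff hc hs).trans
        (seqL_inr_le_inr_iff (v := c)).symm
  · rintro (x | y | z)
    · exact .inl ⟨⟨.inl x, Option.some_ne_none _⟩, rfl⟩
    · exact .inl ⟨⟨.inr y.1, y.2⟩, rfl⟩
    · exact .inr ⟨z, rfl⟩
  · rintro ⟨x | y, hx⟩
    · rfl
    · exact Option.some_get _

theorem seqL_mapL_some_insL_iso (hc : c.uniqueStarL) :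
    ((c.seqL (u.mapL some)).insL v).Iso ((c.insL v).seqL u) := by
  obtain ⟨s, hs, -⟩ := id hc
  have hcu : (c.seqL (u.mapL some)).uniqueStarL := Pomset.IsCtx.seq_map_some (C := ⟦c⟧) hc ⟦u⟧
  have hstar : (c.seqL (u.mapL some)).lab (.inl s) = none := hs
  refine insL_iso_of_surjective hcu hstar
    (fun | ⟨.inl x, hx⟩ => .inl (.inl ⟨x, hx⟩) | ⟨.inr y, _⟩ => .inr y) (fun z => .inl (.inr z))
    ?_ ?_ ?_ (fun _ _ => seqL_inl_le_inl_iff) ?_ ?_ fun _ => rfl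
  · rintro ⟨x | y, hx⟩ ⟨x' | y', hx'⟩
    · exact seqL_inl_le_inl_iff.trans (seqL_inl_le_inl_iff (u := c)).symm
    · exact iff_of_true seqL_inl_le_inr seqL_inl_le_inr
    · exact iff_of_false not_seqL_inr_le_inl not_seqL_inr_le_inl
    · exact seqL_inr_le_inr_iff.trans (seqL_inr_le_inr_iff (v := u.mapL some)).symm
  · rintro ⟨x | y, hx⟩ z
    · exact seqL_inl_le_inl_iff.trans <| (insL_inl_le_inr_iff hc hs).trans
        (seqL_inl_le_inl_iff (u := c)).symm
    · exact iff_of_false not_seqL_inr_le_inl not_seqL_inr_le_inl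
  · rintro z ⟨x | y, hx⟩
    · exact seqL_inl_le_inl_iff.trans <| (insL_inr_le_inl_iff hc hs).trans
        (seqL_inl_le_inl_iff (u := c)).symm
    · exact iff_of_true seqL_inl_le_inr seqL_inl_le_inr
  · rintro ((x | z) | y)
    · exact .inl ⟨⟨.inl x.1, x.2⟩, rfl⟩
    · exact .inr ⟨z, rfl⟩
    · exact .inl ⟨⟨.inr y, Option.some_ne_none _⟩, rfl⟩
  · rintro ⟨x | y, hx⟩
    · exact Option.some_get _
    · rfl

theorem mapL_some_parL_insL_iso (hc : c.uniqueStarL) :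
    (((u.mapL some).parL c).insL v).Iso (u.parL (c.insL v)) := by
  obtain ⟨s, hs, -⟩ := id hc
  have huc : ((u.mapL some).parL c).uniqueStarL := Pomset.IsCtx.map_some_par (C := ⟦c⟧) hc ⟦u⟧
  have hstar : ((u.mapL some).parL c).lab (.inr s) = none := hs
  refine insL_iso_of_surjective huc hstar
    (fun | ⟨.inl x, _⟩ => .inl x | ⟨.inr y, hy⟩ => .inr (.inl ⟨y, hy⟩)) (fun z => .inr (.inr z))
    ?_ ?_ ?_ (fun _ _ => parL_inr_le_inr_iff) ?_ ?_ fun _ => rfl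
  · rintro ⟨x | y, hx⟩ ⟨x' | y', hx'⟩
    · exact parL_inl_le_inl_iff.trans (parL_inl_le_inl_iff (u := u.mapL some)).symm
    · exact iff_of_false not_parL_inl_le_inr not_parL_inl_le_inr
    · exact iff_of_false not_parL_inr_le_inl not_parL_inr_le_inl
    · exact parL_inr_le_inr_iff.trans (parL_inr_le_inr_iff (v := c)).symm
  · rintro ⟨x | y, hx⟩ z
    · exact iff_of_false not_parL_inl_le_inr not_parL_inl_le_inr
    · exact parL_inr_le_inr_iff.trans <| (insL_inl_le_inr_iff hc hs).trans
        (parL_inr_le_inr_iff (v := c)).symm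
  · rintro z ⟨x | y, hx⟩
    · exact iff_of_false not_parL_inr_le_inl not_parL_inr_le_inl
    · exact parL_inr_le_inr_iff.trans <| (insL_inr_le_inl_iff hc hs).trans
        (parL_inr_le_inr_iff (v := c)).symm
  · rintro (x | y | z)
    · exact .inl ⟨⟨.inl x, Option.some_ne_none _⟩, rfl⟩
    · exact .inl ⟨⟨.inr y.1, y.2⟩, rfl⟩
    · exact .inr ⟨z, rfl⟩
  · rintro ⟨x | y, hx⟩
    · rfl
    · exact Option.some_get _

theorem singleL_none_insL_iso : ((singleL none).insL v).Iso v :=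
  insL_iso_of_surjective ⟨PUnit.unit, rfl, fun _ _ => rfl⟩ (s := PUnit.unit) rfl
    (fun x => absurd rfl x.2) id (fun x => absurd rfl x.2) (fun x => absurd rfl x.2)
    (fun _ x => absurd rfl x.2) (fun _ _ => Iff.rfl) (fun z => .inr ⟨z, rfl⟩)
    (fun x => absurd rfl x.2) fun _ => rfl

end LPoset

namespace Pomset

theorem single_none_ins (U : Pomset A) : (single none).ins U = U := by
  induction U using Quotient.inductionOn with | _ u
  exact Quotient.sound LPoset.singleL_none_insL_iso

variable {C : Pomset (Option A)}

theorem map_some_seq_ins (hC : C.IsCtx) (U V : Pomset A) :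
    ((U.map some).seq C).ins V = U.seq (C.ins V) := by
  induction U, C, V using Quotient.inductionOn₃ with | _ u c v
  exact Quotient.sound (LPoset.mapL_some_seqL_insL_iso hC)

theorem seq_map_some_ins (hC : C.IsCtx) (U V : Pomset A) :
    (C.seq (U.map some)).ins V = (C.ins V).seq U := by
  induction U, C, V using Quotient.inductionOn₃ with | _ u c v
  exact Quotient.sound (LPoset.seqL_mapL_some_insL_iso hC)

theorem map_some_par_ins (hC : C.IsCtx) (U V : Pomset A) :
    ((U.map some).par C).ins V = U.par (C.ins V) := by
  induction U, C, V using Quotient.inductionOn₃ with | _ u c v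
  exact Quotient.sound (LPoset.mapL_some_parL_insL_iso hC)

end Pomset

/-! ### Closures under hypotheses -/

theorem GenCtx.exists_ins_eq_ins_ins {C D : Pomset (Option A)} (hC : GenCtx C)
    (hD : GenCtx D) : ∃ E, GenCtx E ∧ ∀ U, E.ins U = C.ins (D.ins U) := by
  induction hC with
  | star => exact ⟨D, hD, fun U => (Pomset.single_none_ins _).symm⟩
  | @seqL V C hV hC ih =>
    obtain ⟨E, hE, h⟩ := ih
    refine ⟨_, .seqL hV hE, fun U => ?_⟩
    rw [Pomset.map_some_seq_ins hE.isSPCtx.1, Pomset.map_some_seq_ins hC.isSPCtx.1, h]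
  | @seqR C V hC hV ih =>
    obtain ⟨E, hE, h⟩ := ih
    refine ⟨_, .seqR hE hV, fun U => ?_⟩
    rw [Pomset.seq_map_some_ins hE.isSPCtx.1,
      Pomset.seq_map_some_ins hC.isSPCtx.1, h]
  | @par V C hV hC ih =>
    obtain ⟨E, hE, h⟩ := ih
    refine ⟨_, .par hV hE, fun U => ?_⟩
    rw [Pomset.map_some_par_ins hE.isSPCtx.1, Pomset.map_some_par_ins hC.isSPCtx.1, h]

theorem GenCtx.spSub_ins {C : Pomset (Option A)} (hC : GenCtx C) {U V : Pomset A}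
    (h : spSub U V) : spSub (C.ins U) (C.ins V) := by
  induction hC with
  | star => simpa only [Pomset.single_none_ins]
  | seqL hW hC ih =>
    simpa only [Pomset.map_some_seq_ins hC.isSPCtx.1] using (spSub.refl hW).seqCong ih
  | seqR hC hW ih =>
    simpa only [Pomset.seq_map_some_ins hC.isSPCtx.1] using ih.seqCong (.refl hW)
  | par hW hC ih =>
    simpa only [Pomset.map_some_par_ins hC.isSPCtx.1] using (spSub.refl hW).parCong ih

section Closure

variable {H : HypSet A} {K K' L : Lang A} {U U' : Pomset A}

theorem ins_mem_cl {C : Pomset (Option A)} (hC : C.IsSPCtx)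
    (hK : ∀ V ∈ K, C.ins V ∈ cl H L) (hU : U ∈ cl H K) : C.ins U ∈ cl H L := by
  induction hU with
  | base hU => exact hK _ hU
  | step hef hD _ hU ih =>
    obtain ⟨E, hE, hE_ins⟩ := hC.genCtx.exists_ins_eq_ins_ins hD.genCtx
    simp only [← hE_ins] at ih ⊢
    exact closure.step hef hE.isSPCtx ih hU

theorem cl_subset_cl (h : K ⊆ cl H L) : cl H K ⊆ cl H L := fun U hU => by
  rw [← Pomset.single_none_ins U]
  exact ins_mem_cl GenCtx.star.isSPCtx
    (fun V hV => (Pomset.single_none_ins V).symm ▸ h hV) hU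

theorem lang_subset_cl_lang {e f : Term A} (hef : (e, f) ∈ H) : e.lang ⊆ cl H f.lang :=
  fun U hU => by
    rw [← Pomset.single_none_ins U]
    exact closure.step hef GenCtx.star.isSPCtx
      (fun V hV => (Pomset.single_none_ins V).symm ▸ .base hV) hU

theorem seq_mem_cl (hK : K ⊆ SPset A) (hU' : U'.IsSP) (h : U ∈ cl H K) (h' : U' ∈ cl H K') :
    U.seq U' ∈ cl H (K.seq K') := by
  have star_seq (W : Pomset A) : ((starCtx A).seq (U'.map some)).ins W = W.seq U' := by
    rw [starCtx, Pomset.seq_map_some_ins GenCtx.star.isSPCtx.1, Pomset.single_none_ins]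
  have seq_star (V W : Pomset A) : ((V.map some).seq (starCtx A)).ins W = V.seq W := by
    rw [starCtx, Pomset.map_some_seq_ins GenCtx.star.isSPCtx.1, Pomset.single_none_ins]
  rw [← star_seq]
  refine ins_mem_cl (GenCtx.star.seqR hU').isSPCtx (fun V hV => ?_) h
  rw [star_seq, ← seq_star]
  refine ins_mem_cl (GenCtx.seqL (hK hV) .star).isSPCtx (fun V' hV' => ?_) h'
  exact seq_star V V' ▸ .base ⟨V, hV, V', hV', rfl⟩

theorem par_mem_cl (hK : K ⊆ SPset A) (hU' : U'.IsSP) (h : U ∈ cl H K) (h' : U' ∈ cl H K') :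
    U.par U' ∈ cl H (K.par K') := by
  have par_star (V W : Pomset A) : ((V.map some).par (starCtx A)).ins W = V.par W := by
    rw [starCtx, Pomset.map_some_par_ins GenCtx.star.isSPCtx.1, Pomset.single_none_ins]
  rw [Pomset.par_comm, ← par_star]
  refine ins_mem_cl (GenCtx.par hU' .star).isSPCtx (fun V hV => ?_) h
  rw [par_star, Pomset.par_comm, ← par_star]
  refine ins_mem_cl (GenCtx.par (hK hV) .star).isSPCtx (fun V' hV' => ?_) h'
  exact par_star V V' ▸ .base ⟨V, hV, V', hV', rfl⟩

end Closure

/-! ### The exchange hypotheses -/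

theorem Lang.singleton_seq_singleton (U V : Pomset A) :
    Lang.seq {U} {V} = {U.seq V} := by
  simp [Lang.seq]

theorem Lang.singleton_par_singleton (U V : Pomset A) :
    Lang.par {U} {V} = {U.par V} := by
  simp [Lang.par]

theorem Lang.seq_subset_SPset {L K : Lang A} (hL : L ⊆ SPset A) (hK : K ⊆ SPset A) :
    L.seq K ⊆ SPset A := by
  rintro _ ⟨U, hU, V, hV, rfl⟩
  exact (hL hU).seq (hK hV)

theorem Lang.par_subset_SPset {L K : Lang A} (hL : L ⊆ SPset A) (hK : K ⊆ SPset A) :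
    L.par K ⊆ SPset A := by
  rintro _ ⟨U, hU, V, hV, rfl⟩
  exact (hL hU).par (hK hV)

theorem Lang.pow_subset_SPset {L : Lang A} (hL : L ⊆ SPset A) : ∀ n, L.pow n ⊆ SPset A
  | 0 => Set.singleton_subset_iff.mpr .empty
  | n + 1 => Lang.seq_subset_SPset (Lang.pow_subset_SPset hL n) hL

theorem Term.lang_subset_SPset : ∀ e : Term A, e.lang ⊆ SPset A
  | .zero => Set.empty_subset _
  | .one => Set.singleton_subset_iff.mpr .empty
  | .var a => Set.singleton_subset_iff.mpr (.single a)
  | .add e f => Set.union_subset e.lang_subset_SPset f.lang_subset_SPset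
  | .seq e f => Lang.seq_subset_SPset e.lang_subset_SPset f.lang_subset_SPset
  | .par e f => Lang.par_subset_SPset e.lang_subset_SPset f.lang_subset_SPset
  | .star e => Set.iUnion_subset (Lang.pow_subset_SPset e.lang_subset_SPset)

theorem Pomset.IsSP.exists_term_lang_eq {U : Pomset A} (hU : U.IsSP) :
    ∃ e : Term A, e.lang = {U} := by
  induction hU with
  | empty => exact ⟨.one, rfl⟩
  | single a => exact ⟨.var a, rfl⟩
  | seq _ _ ihU ihV =>
    obtain ⟨⟨e, he⟩, ⟨f, hf⟩⟩ := And.intro ihU ihV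
    exact ⟨.seq e f, by rw [Term.lang, he, hf, Lang.singleton_seq_singleton]⟩
  | par _ _ ihU ihV =>
    obtain ⟨⟨e, he⟩, ⟨f, hf⟩⟩ := And.intro ihU ihV
    exact ⟨.par e f, by rw [Term.lang, he, hf, Lang.singleton_par_singleton]⟩

theorem par_seq_par_mem_cl_exch {U V W X : Pomset A} (hU : U.IsSP) (hV : V.IsSP)
    (hW : W.IsSP) (hX : X.IsSP) :
    (U.par V).seq (W.par X) ∈ cl (exch A) {(U.seq W).par (V.seq X)} := by
  obtain ⟨e, he⟩ := hU.exists_term_lang_eq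
  obtain ⟨f, hf⟩ := hV.exists_term_lang_eq
  obtain ⟨g, hg⟩ := hW.exists_term_lang_eq
  obtain ⟨h, hh⟩ := hX.exists_term_lang_eq
  have hexch : (Term.seq (.par e f) (.par g h), Term.par (.seq e g) (.seq f h)) ∈ exch A :=
    ⟨e, f, g, h, rfl⟩
  have hl : (Term.seq (.par e f) (.par g h)).lang = {(U.par V).seq (W.par X)} := by
    simp only [Term.lang, he, hf, hg, hh, Lang.singleton_seq_singleton,
      Lang.singleton_par_singleton]
  have hr : (Term.par (.seq e g) (.seq f h)).lang = {(U.seq W).par (V.seq X)} := by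
    simp only [Term.lang, he, hf, hg, hh, Lang.singleton_seq_singleton,
      Lang.singleton_par_singleton]
  exact hr ▸ lang_subset_cl_lang hexch (hl ▸ rfl)

theorem spSub.isSP {U V : Pomset A} (h : spSub U V) : U.IsSP ∧ V.IsSP := by
  induction h with
  | refl hU => exact ⟨hU, hU⟩
  | trans _ _ ih ih' => exact ⟨ih.1, ih'.2⟩
  | seqCong _ _ ih ih' => exact ⟨ih.1.seq ih'.1, ih.2.seq ih'.2⟩
  | parCong _ _ ih ih' => exact ⟨ih.1.par ih'.1, ih.2.par ih'.2⟩
  | exch hU hV hW hX => exact ⟨(hU.par hV).seq (hW.par hX), (hU.seq hW).par (hV.seq hX)⟩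

theorem mem_cl_exch_of_spSub {U V : Pomset A} (h : spSub U V) : U ∈ cl (exch A) {V} := by
  induction h with
  | refl => exact .base rfl
  | trans _ _ ih ih' => exact cl_subset_cl (Set.singleton_subset_iff.mpr ih') ih
  | seqCong h h' ih ih' =>
    rw [← Lang.singleton_seq_singleton]
    exact seq_mem_cl (Set.singleton_subset_iff.mpr h.isSP.2) h'.isSP.1 ih ih'
  | parCong h h' ih ih' =>
    rw [← Lang.singleton_par_singleton]
    exact par_mem_cl (Set.singleton_subset_iff.mpr h.isSP.2) h'.isSP.1 ih ih'
  | exch hU hV hW hX => exact par_seq_par_mem_cl_exch hU hV hW hX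

theorem exists_spSub_of_mem_lang_of_mem_exch {e f : Term A} (hef : (e, f) ∈ exch A)
    {U : Pomset A} (hU : U ∈ e.lang) : ∃ V ∈ f.lang, spSub U V := by
  obtain ⟨e, f, g, h, ⟨⟩⟩ := hef
  obtain ⟨_, ⟨U, hU, V, hV, rfl⟩, _, ⟨W, hW, X, hX, rfl⟩, rfl⟩ := hU
  exact ⟨_, ⟨_, ⟨U, hU, W, hW, rfl⟩, _, ⟨V, hV, X, hX, rfl⟩, rfl⟩,
    .exch (e.lang_subset_SPset hU) (f.lang_subset_SPset hV) (g.lang_subset_SPset hW)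
      (h.lang_subset_SPset hX)⟩

theorem exists_spSub_of_mem_cl_exch {L : Lang A} (hL : L ⊆ SPset A) {U : Pomset A}
    (hU : U ∈ cl (exch A) L) : ∃ V ∈ L, spSub U V := by
  induction hU with
  | @base U hU => exact ⟨U, hU, .refl (hL hU)⟩
  | step hef hC _ hU ih =>
    obtain ⟨V, hV, hUV⟩ := exists_spSub_of_mem_lang_of_mem_exch hef hU
    obtain ⟨W, hW, hVW⟩ := ih V hV
    exact ⟨W, hW, (hC.genCtx.spSub_ins hUV).trans hVW⟩

/-- **Characterisation of the `exch`-closure**: for `L ⊆ SP` and `U ∈ SP`,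
`U ∈ cl_exch(L)` iff `U ⊑^sp V` for some `V ∈ L`. -/
theorem exch_closure_vs_subsumption (A : Type) (L : Lang A) (hL : L ⊆ SPset A)
    (U : Pomset A) (hU : U.IsSP) :
    U ∈ cl (exch A) L ↔ ∃ V ∈ L, spSub U V :=
  ⟨exists_spSub_of_mem_cl_exch hL, fun ⟨_, hV, hUV⟩ =>
    cl_subset_cl (Set.singleton_subset_iff.mpr (.base hV)) (mem_cl_exch_of_spSub hUV)⟩

end CKAH
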